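/- arXiv:2502.13331 — 3 statements merged into one kernel-verified Lean document; each statement's English description precedes it below -/
import Mathlib

section
/- Let q be an odd prime power with q ≡ 1 (mod 4), let k be a divisor of q−1 with 3 < k < q−1, set e = (q−1)/k, and assume e is odd and k < p, where p is the characteristic of F_q. Then (q,k) gives a 3-design; more precisely, the PSL(2,q)-orbit of B is the block set of a 3-(q+1, k, λ) design with λ = (k−1)(k−2)/2. -/
/-!
Setting: `F` is a finite field of order `q`. The projective line `PG(1,q)` is
modelled as `Projectivization F (Fin 2 → F)`. Since scalar matrices act trivially
on the projective line, the images of a set under all elements of `SL(2,F)` form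
exactly its `PSL(2,F)`-orbit; `mapSL g` is the map of the projective line induced
by `g : SL(2,F)`. For `k ∣ q - 1`, the unique subgroup of order `k` of `Fˣ` is the
set of `k`-th roots of unity `{x : F | x ^ k = 1}`, embedded into the projective
line via `x ↦ [x : 1]`. `(q, k)` gives a 3-design iff there is `lam > 0` such that
every 3-subset of the projective line lies in exactly `lam` blocks of the orbit.
-/

noncomputable section

open Matrix

/-- The point at infinity `[1 : 0]` of the projective line over `F`. -/
def inftyPt (F : Type) [Field F] : Projectivization F (Fin 2 → F) :=
  Projectivization.mk F ![1, 0] (by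
    intro h
    simpa using congrFun h 0)

/-- The embedding of `F` into the projective line, `x ↦ [x : 1]`. -/
def embedPt (F : Type) [Field F] (x : F) : Projectivization F (Fin 2 → F) :=
  Projectivization.mk F ![x, 1] (by
    intro h
    simpa using congrFun h 1)

/-- The action of `g : SL(2,F)` on the projective line (as linear fractional
transformation). -/
def mapSL {F : Type} [Field F] (g : Matrix.SpecialLinearGroup (Fin 2) F) :
    Projectivization F (Fin 2 → F) → Projectivization F (Fin 2 → F) :=
  Projectivization.map (Matrix.SpecialLinearGroup.toLin' g : (Fin 2 → F) →ₗ[F] (Fin 2 → F))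
    (Matrix.SpecialLinearGroup.toLin' g).injective

/-- The starter block: the unique subgroup of order `k` of `Fˣ` (the `k`-th roots
of unity, for `k ∣ q - 1`), regarded as a subset of the projective line. -/
def starterB (F : Type) [Field F] (k : ℕ) : Set (Projectivization F (Fin 2 → F)) :=
  embedPt F '' {x : F | x ^ k = 1}

/-- The `PSL(2,F)`-orbit `GB` of the starter block. -/
def designBlocks (F : Type) [Field F] (k : ℕ) :
    Set (Set (Projectivization F (Fin 2 → F))) :=
  {S | ∃ g : Matrix.SpecialLinearGroup (Fin 2) F, S = mapSL g '' starterB F k}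

/-- `GB` is the block set of a `3-(q+1, k, lam)` design: `lam` is positive and every
3-subset of the projective line is contained in exactly `lam` blocks. -/
def isThreeDesign (F : Type) [Field F] (k lam : ℕ) : Prop :=
  0 < lam ∧
    ∀ T : Finset (Projectivization F (Fin 2 → F)), T.card = 3 →
      {S ∈ designBlocks F k | (T : Set (Projectivization F (Fin 2 → F))) ⊆ S}.ncard = lam

/-- `(q, k)` gives a 3-design. -/
def gives3Design (F : Type) [Field F] (k : ℕ) : Prop :=
  ∃ lam : ℕ, isThreeDesign F k lam

/-!
The map `z ↦ ζ * z`, for `ζ` a primitive `k`-th root of unity, stabilises the starter block `B`,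
and its determinant `ζ` is not a square because `e` is odd. Hence the `PSL(2, F)`-orbit of `B`
is already its `PGL(2, F)`-orbit. Since `PGL(2, F)` is sharply 3-transitive on the projective
line, the elements `g` with `T ⊆ g • B`, for a 3-subset `T`, correspond to the injections of `T`
into `B`, so the number of blocks through `T` is `k (k - 1) (k - 2)` divided by the order of the
stabiliser of `B`.

If `z ↦ (a z + b) / (c z + d)` stabilises `B`, then `(a X + b) ^ k - (c X + d) ^ k` vanishes on
`B`, so it is a multiple of `X ^ k - 1`; as `k` and `k.choose 2` are nonzero in `F`, its
coefficients at `X` and `X ^ 2` force `b = c = 0` or `a = d = 0`. So the stabiliser consists of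
the `2 k` maps `z ↦ u z` and `z ↦ u / z` with `u ^ k = 1`.
-/

section Counting

open MulAction
open scoped Pointwise

variable {G X : Type*} [Group G] [MulAction G X]

lemma card_smul_eq_ncard_orbit_mul_card_stabilizer (b : X) (P : X → Prop) :
    Nat.card {g : G // P (g • b)} = {x ∈ orbit G b | P x}.ncard * Nat.card (stabilizer G b) := by
  let e := orbitProdStabilizerEquivGroup G b
  have coe_fst_e_symm (g : G) : ((e.symm g).1 : X) = g • b := rfl
  calc Nat.card {g : G // P (g • b)}
      = Nat.card {x : orbit G b × stabilizer G b // P x.1} :=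
        Nat.card_congr (e.symm.subtypeEquiv fun g ↦ by rw [coe_fst_e_symm])
    _ = Nat.card {x : orbit G b // P x} * Nat.card (stabilizer G b) := by
        rw [← Nat.card_prod]
        exact Nat.card_congr (Equiv.prodSubtypeFstEquivSubtypeProd (p := fun x : orbit G b ↦ P x))
    _ = _ := by
        rw [Nat.card_congr (Equiv.subtypeSubtypeEquivSubtypeInter (· ∈ orbit G b) P)]
        rfl

lemma card_embedding_mem_eq_descFactorial {B : Set X} (hB : B.Finite) (n : ℕ) :
    Nat.card {s : Fin n ↪ X // ∀ i, s i ∈ B} = B.ncard.descFactorial n := by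
  classical
  have := hB.fintype
  rw [Nat.card_congr (Equiv.codRestrict (Fin n) B), Nat.card_eq_fintype_card,
    Fintype.card_embedding_eq, Fintype.card_fin, ← Nat.card_eq_fintype_card,
    Nat.card_coe_set_eq]

lemma ncard_orbit_superset_mul_card_stabilizer {n : ℕ}
    (hG : ∀ t : Fin n ↪ X, Function.Bijective fun g : G ↦ g • t) {B : Set X} (hB : B.Finite)
    {T : Finset X} (hT : T.card = n) :
    {S ∈ orbit G B | ↑T ⊆ S}.ncard * Nat.card (stabilizer G B) = B.ncard.descFactorial n := by
  let t : Fin n ↪ X := (T.equivFinOfCardEq hT).symm.toEmbedding.trans (.subtype _)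
  have subset_smul_iff (g : G) : ↑T ⊆ g • B ↔ ∀ i, (g⁻¹ • t) i ∈ B := by
    simp only [Set.subset_def, Set.mem_smul_set_iff_inv_smul_mem, Finset.mem_coe]
    exact ⟨fun h i ↦ h _ (Subtype.prop _), fun h x hx ↦ by
      simpa [t] using h (T.equivFinOfCardEq hT ⟨x, hx⟩)⟩
  calc _ = Nat.card {g : G // ↑T ⊆ g • B} :=
        (card_smul_eq_ncard_orbit_mul_card_stabilizer B (↑T ⊆ ·)).symm
    _ = Nat.card {s : Fin n ↪ X // ∀ i, s i ∈ B} :=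
        Nat.card_congr <| ((Equiv.inv G).trans (.ofBijective _ (hG t))).subtypeEquiv subset_smul_iff
    _ = B.ncard.descFactorial n := card_embedding_mem_eq_descFactorial hB n

end Counting

section ProjectiveLine

open MulAction Matrix.ProjGenLinGroup
open scoped LinearAlgebra.Projectivization MatrixGroups Pointwise

lemma projectivization_mk_eq_mk_iff_mul_eq_mul {K : Type*} [Field K] {v w : Fin 2 → K}
    (hv : v ≠ 0) (hw : w ≠ 0) :
    Projectivization.mk K v hv = Projectivization.mk K w hw ↔ v 0 * w 1 = v 1 * w 0 := by
  rw [Projectivization.mk_eq_mk_iff']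
  constructor
  · rintro ⟨a, rfl⟩
    simp only [Pi.smul_apply, smul_eq_mul]
    ring
  · intro h
    by_cases hw0 : w 0 = 0
    · have hw1 : w 1 ≠ 0 := fun hw1 ↦ hw <| funext <| Fin.forall_fin_two.2 ⟨hw0, hw1⟩
      refine ⟨v 1 / w 1, funext <| Fin.forall_fin_two.2 ⟨?_, ?_⟩⟩ <;>
        simp only [Pi.smul_apply, smul_eq_mul] <;> field_simp
      linear_combination -h
    · refine ⟨v 0 / w 0, funext <| Fin.forall_fin_two.2 ⟨?_, ?_⟩⟩ <;>
        simp only [Pi.smul_apply, smul_eq_mul] <;> field_simp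
      linear_combination h

variable {F : Type} [Field F]

lemma embedPt_injective : Function.Injective (embedPt F) := fun x y h ↦ by
  simpa [embedPt, projectivization_mk_eq_mk_iff_mul_eq_mul] using h

lemma embedPt_ne_inftyPt (x : F) : embedPt F x ≠ inftyPt F := by
  simp [embedPt, inftyPt, projectivization_mk_eq_mk_iff_mul_eq_mul]

lemma mk_smul_embedPt_eq_embedPt_iff {g : GL (Fin 2) F} {x y : F} :
    mk g • embedPt F x = embedPt F y ↔ g 0 0 * x + g 0 1 = y * (g 1 0 * x + g 1 1) := by
  simp [embedPt, projectivization_mk_eq_mk_iff_mul_eq_mul, mul_comm y]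

lemma mk_smul_embedPt_eq_inftyPt_iff {g : GL (Fin 2) F} {x : F} :
    mk g • embedPt F x = inftyPt F ↔ g 1 0 * x + g 1 1 = 0 := by
  simp [embedPt, inftyPt, projectivization_mk_eq_mk_iff_mul_eq_mul, eq_comm]

lemma mk_smul_inftyPt_eq_embedPt_iff {g : GL (Fin 2) F} {y : F} :
    mk g • inftyPt F = embedPt F y ↔ g 0 0 = y * g 1 0 := by
  simp [embedPt, inftyPt, projectivization_mk_eq_mk_iff_mul_eq_mul, mul_comm y]

lemma mk_smul_inftyPt_eq_inftyPt_iff {g : GL (Fin 2) F} :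
    mk g • inftyPt F = inftyPt F ↔ g 1 0 = 0 := by
  simp [inftyPt, projectivization_mk_eq_mk_iff_mul_eq_mul, eq_comm]

lemma eq_one_of_fixes_infty_zero_one {g : PGL(2, F)} (fix_infty : g • inftyPt F = inftyPt F)
    (fix_zero : g • embedPt F 0 = embedPt F 0) (fix_one : g • embedPt F 1 = embedPt F 1) :
    g = 1 := by
  obtain ⟨A, rfl⟩ := mk_surjective g
  have h10 : A 1 0 = 0 := mk_smul_inftyPt_eq_inftyPt_iff.1 fix_infty
  have h01 : A 0 1 = 0 := by simpa using mk_smul_embedPt_eq_embedPt_iff.1 fix_zero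
  have h00 : A 0 0 = A 1 1 := by simpa [h10, h01] using mk_smul_embedPt_eq_embedPt_iff.1 fix_one
  have h11 : A 1 1 ≠ 0 := fun h ↦ A.det_ne_zero <| by rw [det_fin_two, h10, h]; ring
  rw [← mk_one, eq_comm, mk_eq_mk_iff]
  refine ⟨Units.mk0 _ h11, GeneralLinearGroup.ext fun i j ↦ ?_⟩
  fin_cases i <;> fin_cases j <;> simp [h00, h10, h01]

lemma projGenLinGroup_ext {g h : PGL(2, F)} (h_infty : g • inftyPt F = h • inftyPt F)
    (h_zero : g • embedPt F 0 = h • embedPt F 0) (h_one : g • embedPt F 1 = h • embedPt F 1) :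
    g = h := by
  rw [← inv_mul_eq_one]
  apply eq_one_of_fixes_infty_zero_one <;> rwa [mul_smul, inv_smul_eq_iff, eq_comm]

/-- The triple `(∞, 0, 1)` of points of the projective line, on which `PGL(2, F)` acts simply
transitively. -/
def baseTriple (F : Type) [Field F] : Fin 3 ↪ ℙ F (Fin 2 → F) where
  toFun := ![inftyPt F, embedPt F 0, embedPt F 1]
  inj' := by
    have zero_ne_one : embedPt F 0 ≠ embedPt F 1 := embedPt_injective.ne _root_.zero_ne_one
    intro i j
    fin_cases i <;> fin_cases j <;>
      simp [embedPt_ne_inftyPt, (embedPt_ne_inftyPt _).symm, zero_ne_one, zero_ne_one.symm]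

lemma smul_baseTriple_eq_iff {g : PGL(2, F)} {t : Fin 3 ↪ ℙ F (Fin 2 → F)} :
    g • baseTriple F = t ↔
      g • inftyPt F = t 0 ∧ g • embedPt F 0 = t 1 ∧ g • embedPt F 1 = t 2 := by
  rw [DFunLike.ext_iff, Fin.forall_fin_succ, Fin.forall_fin_two]
  rfl

-- The columns of the matrix are the multiples of representatives `u`, `v` of the first two points
-- that add up, by Cramer's rule, to a multiple of a representative `w` of the third.
lemma exists_smul_baseTriple_eq (t : Fin 3 ↪ ℙ F (Fin 2 → F)) :
    ∃ g : PGL(2, F), g • baseTriple F = t := by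
  have h01 : t 0 ≠ t 1 := t.injective.ne (by decide)
  have h02 : t 0 ≠ t 2 := t.injective.ne (by decide)
  have h12 : t 1 ≠ t 2 := t.injective.ne (by decide)
  simp only [smul_baseTriple_eq_iff]
  generalize t 0 = p, t 1 = q, t 2 = r at h01 h02 h12
  induction p with | h u hu
  induction q with | h v hv
  induction r with | h w hw
  rw [Ne, projectivization_mk_eq_mk_iff_mul_eq_mul, ← sub_eq_zero] at h01 h02 h12
  let α := w 0 * v 1 - w 1 * v 0
  let β := u 0 * w 1 - u 1 * w 0
  have det_ne_zero : det !![α * u 0, β * v 0; α * u 1, β * v 1] ≠ 0 := by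
    have factored : det !![α * u 0, β * v 0; α * u 1, β * v 1] =
        -(v 0 * w 1 - v 1 * w 0) * (u 0 * w 1 - u 1 * w 0) * (u 0 * v 1 - u 1 * v 0) := by
      simp only [det_fin_two_of, α, β]
      ring
    rw [factored]
    exact mul_ne_zero (mul_ne_zero (neg_ne_zero.2 h12) h02) h01
  refine ⟨mk (.mkOfDetNeZero _ det_ne_zero), ?_, ?_, ?_⟩ <;>
    simp only [embedPt, inftyPt, projectivization_mk_eq_mk_iff_mul_eq_mul,
      GeneralLinearGroup.mkOfDetNeZero, Projectivization.PGL.mk_smul_mk,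
      GeneralLinearGroup.fin_two_smul, GeneralLinearGroup.val_mk', of_apply, cons_val',
      cons_val_zero, cons_val_fin_one, cons_val_one, mul_one, mul_zero, α, β] <;>
    ring

theorem bijective_projGenLinGroup_smul_triple (t : Fin 3 ↪ ℙ F (Fin 2 → F)) :
    Function.Bijective fun g : PGL(2, F) ↦ g • t := by
  have base : Function.Bijective fun g : PGL(2, F) ↦ g • baseTriple F := by
    refine ⟨fun g h hgh ↦ ?_, exists_smul_baseTriple_eq⟩
    obtain ⟨h_infty, h_zero, h_one⟩ := smul_baseTriple_eq_iff.1 hgh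
    exact projGenLinGroup_ext h_infty h_zero h_one
  obtain ⟨h, rfl⟩ := exists_smul_baseTriple_eq t
  simpa only [Function.comp_def, Equiv.coe_mulRight, mul_smul] using
    base.comp (Equiv.mulRight h).bijective

/-- The class of the linear fractional transformation `z ↦ u * z` in `PGL(2, F)`. -/
def dilation (u : Fˣ) : PGL(2, F) :=
  mk (.mkOfDetNeZero !![(u : F), 0; 0, 1] (by simp))

/-- The class of the linear fractional transformation `z ↦ u / z` in `PGL(2, F)`. -/
def inversion (u : Fˣ) : PGL(2, F) :=
  mk (.mkOfDetNeZero !![0, (u : F); 1, 0] (by simp))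

lemma dilation_smul_inftyPt (u : Fˣ) : dilation u • inftyPt F = inftyPt F :=
  mk_smul_inftyPt_eq_inftyPt_iff.2 (by simp [GeneralLinearGroup.mkOfDetNeZero])

lemma dilation_smul_embedPt (u : Fˣ) (x : F) : dilation u • embedPt F x = embedPt F (u * x) :=
  mk_smul_embedPt_eq_embedPt_iff.2 (by simp [GeneralLinearGroup.mkOfDetNeZero])

lemma inversion_smul_inftyPt (u : Fˣ) : inversion u • inftyPt F = embedPt F 0 :=
  mk_smul_inftyPt_eq_embedPt_iff.2 (by simp [GeneralLinearGroup.mkOfDetNeZero])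

lemma inversion_smul_embedPt_zero (u : Fˣ) : inversion u • embedPt F 0 = inftyPt F :=
  mk_smul_embedPt_eq_inftyPt_iff.2 (by simp [GeneralLinearGroup.mkOfDetNeZero])

lemma inversion_smul_embedPt {x : F} (u : Fˣ) (hx : x ≠ 0) :
    inversion u • embedPt F x = embedPt F (u / x) :=
  mk_smul_embedPt_eq_embedPt_iff.2 (by simp [GeneralLinearGroup.mkOfDetNeZero, hx])

lemma dilation_injective : Function.Injective (dilation (F := F)) := fun u v h ↦ by
  have := congrArg (· • embedPt F 1) h
  exact Units.ext (by simpa [dilation_smul_embedPt, embedPt_injective.eq_iff] using this)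

lemma inversion_injective : Function.Injective (inversion (F := F)) := fun u v h ↦ by
  have := congrArg (· • embedPt F 1) h
  exact Units.ext (by simpa [inversion_smul_embedPt, embedPt_injective.eq_iff] using this)

lemma dilation_ne_inversion (u v : Fˣ) : dilation u ≠ inversion v := fun h ↦ by
  have := congrArg (· • inftyPt F) h
  simp [dilation_smul_inftyPt, inversion_smul_inftyPt, (embedPt_ne_inftyPt _).symm] at this

lemma exists_toPGL_eq_mk {n R : Type*} [Fintype n] [DecidableEq n] [CommRing R] {M : GL n R}
    {r : Rˣ} (hr : r ^ Fintype.card n = M.det) :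
    ∃ g : SpecialLinearGroup n R, SpecialLinearGroup.toPGL g = mk M := by
  have hdet : (r⁻¹.1 • M.1).det = 1 := by
    rw [det_smul, ← Units.val_pow_eq_pow_val, ← GeneralLinearGroup.val_det_apply, ← hr,
      ← Units.val_mul, inv_pow, inv_mul_cancel, Units.val_one]
  refine ⟨⟨r⁻¹.1 • M.1, hdet⟩, mk_eq_mk_iff.2 ⟨r, Units.ext ?_⟩⟩
  have : (r⁻¹.1 • M.1) * diagonal (fun _ ↦ r.1) = M.1 := by
    simp [← smul_one_eq_diagonal, smul_smul]
  exact this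

lemma exists_toPGL_eq_mk_of_isSquare_det {M : GL (Fin 2) F} (hM : IsSquare (M.det : F)) :
    ∃ g : SpecialLinearGroup (Fin 2) F, SpecialLinearGroup.toPGL g = mk M := by
  obtain ⟨r, hr⟩ := hM
  have hr0 : r ≠ 0 := fun h ↦ M.det.ne_zero (by rw [hr, h, zero_mul])
  exact exists_toPGL_eq_mk (r := Units.mk0 r hr0) (Units.ext (by simp [hr, sq]))

lemma mapSL_eq_toPGL_smul (g : SpecialLinearGroup (Fin 2) F) (p : ℙ F (Fin 2 → F)) :
    mapSL g p = SpecialLinearGroup.toPGL g • p := by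
  induction p with | h v hv
  rfl

end ProjectiveLine

section RootsOfUnity

open Polynomial

lemma coeff_C_mul_X_add_C_pow {R : Type*} [CommSemiring R] (a b : R) (n i : ℕ) :
    ((C a * X + C b) ^ n).coeff i = a ^ i * b ^ (n - i) * n.choose i := by
  have : (C a * X + C b) ^ n = ((X + C b) ^ n).comp (C a * X) := by simp
  rw [this, comp_C_mul_X_coeff, coeff_X_add_C_pow]
  ring

lemma coeff_eq_zero_of_eval_rootsOfUnity_eq_zero {R : Type*} [CommRing R] [IsDomain R] {ζ : R}
    {k : ℕ} (hζ : IsPrimitiveRoot ζ k) {p : R[X]} (hdeg : p.natDegree ≤ k)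
    (hp : ∀ x, x ^ k = 1 → p.eval x = 0) {i : ℕ} (hi : 0 < i) (hik : i < k) : p.coeff i = 0 := by
  have hk : 0 < k := hi.trans hik
  let r := p - C (p.coeff k) * (X ^ k - 1)
  have r_coeff {j : ℕ} (hj : 0 < j) (hjk : j ≠ k) : r.coeff j = p.coeff j := by
    simp [r, coeff_X_pow, coeff_one, hjk, hj.ne']
  have r_degree : r.degree < k := by
    refine (degree_lt_iff_coeff_zero _ _).2 fun j hj ↦ ?_
    rcases hj.eq_or_lt with rfl | hkj
    · simp [r, coeff_one, hk.ne']
    · rw [r_coeff (hk.trans hkj) hkj.ne', coeff_eq_zero_of_natDegree_lt (hdeg.trans_lt hkj)]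
  have r_eq_zero : r = 0 := by
    refine eq_zero_of_degree_lt_of_eval_finset_eq_zero (nthRootsFinset k (1 : R))
      (by rwa [hζ.card_nthRootsFinset]) fun x hx ↦ ?_
    have hx : x ^ k = 1 := (mem_nthRootsFinset hk 1).1 hx
    simp [r, hp x hx, hx]
  rw [← r_coeff hi hik.ne, r_eq_zero, coeff_zero]

variable {K : Type*} [Field K] {ζ : K} {k : ℕ}

lemma natCast_choose_two_ne_zero (hk0 : (k : K) ≠ 0) (hk1 : (k : K) ≠ 1) :
    (k.choose 2 : K) ≠ 0 := fun h ↦ by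
  have two_mul_choose : k.choose 2 * 2 = k * (k - 1) := by
    rw [Nat.choose_two_right, Nat.div_mul_cancel (Nat.even_mul_pred_self k).two_dvd]
  have hk : 0 < k := Nat.pos_of_ne_zero fun hk ↦ hk0 (by simp [hk])
  have : (k.choose 2 : K) * 2 = k * (k - 1) := by
    rw [← Nat.cast_pred hk, ← Nat.cast_mul, ← two_mul_choose, Nat.cast_mul, Nat.cast_two]
  rw [h, zero_mul, eq_comm, mul_eq_zero, sub_eq_zero] at this
  exact this.elim hk0 hk1

lemma eq_zero_of_mul_pow_eq_mul_pow {a b c d : K} {n : ℕ} (hdet : a * d - b * c ≠ 0)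
    (h₁ : a * b ^ (n + 2) = c * d ^ (n + 2)) (h₂ : a ^ 2 * b ^ (n + 1) = c ^ 2 * d ^ (n + 1)) :
    (b = 0 ∧ c = 0) ∨ (a = 0 ∧ d = 0) := by
  have hab : a * b ^ (n + 2) = 0 := by
    have : a * b ^ (n + 2) * (a * d - b * c) = 0 := by linear_combination b * d * h₂ - b * c * h₁
    exact (mul_eq_zero.1 this).resolve_right hdet
  have hcd : c * d ^ (n + 2) = 0 := h₁ ▸ hab
  simp only [mul_eq_zero, pow_eq_zero_iff (Nat.succ_ne_zero _)] at hab hcd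
  rcases hab with rfl | rfl <;> rcases hcd with rfl | rfl <;> simp_all

lemma diagonal_or_antidiagonal_of_pow_eq_pow (hζ : IsPrimitiveRoot ζ k) (hk : 2 < k)
    (hk1 : (k : K) ≠ 1) {a b c d : K} (hdet : a * d - b * c ≠ 0)
    (h : ∀ x, x ^ k = 1 → (a * x + b) ^ k = (c * x + d) ^ k) :
    (b = 0 ∧ c = 0) ∨ (a = 0 ∧ d = 0) := by
  have : NeZero k := ⟨by omega⟩
  have hk0 : (k : K) ≠ 0 := hζ.neZero'.out
  have coeff_eq {i : ℕ} (hi : 0 < i) (hik : i < k) (hchoose : (k.choose i : K) ≠ 0) :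
      a ^ i * b ^ (k - i) = c ^ i * d ^ (k - i) := by
    have hdeg : ((C a * X + C b) ^ k - (C c * X + C d) ^ k).natDegree ≤ k := by compute_degree
    have := coeff_eq_zero_of_eval_rootsOfUnity_eq_zero hζ hdeg
      (fun x hx ↦ by simp [h x hx]) hi hik
    rw [coeff_sub, coeff_C_mul_X_add_C_pow, coeff_C_mul_X_add_C_pow, ← sub_mul] at this
    exact sub_eq_zero.1 ((mul_eq_zero.1 this).resolve_right hchoose)
  have h₁ := coeff_eq one_pos (by omega) (by simpa using hk0)
  have h₂ := coeff_eq two_pos hk (natCast_choose_two_ne_zero hk0 hk1)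
  obtain ⟨n, rfl⟩ := Nat.exists_eq_add_of_le' hk
  exact eq_zero_of_mul_pow_eq_mul_pow hdet (by simpa using h₁) h₂

end RootsOfUnity

section StarterBlock

open MulAction Matrix.ProjGenLinGroup
open scoped MatrixGroups Pointwise

variable {F : Type} [Field F] {ζ : F} {k : ℕ}

lemma mem_starterB {p : Projectivization F (Fin 2 → F)} :
    p ∈ starterB F k ↔ ∃ x : F, x ^ k = 1 ∧ embedPt F x = p := Iff.rfl

lemma starterB_finite (hk : 0 < k) : (starterB F k).Finite := by
  refine .image _ <| (Polynomial.nthRootsFinset k (1 : F)).finite_toSet.subset fun x hx ↦ ?_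
  exact (Polynomial.mem_nthRootsFinset hk 1).2 hx

lemma ncard_starterB (hζ : IsPrimitiveRoot ζ k) (hk : 0 < k) : (starterB F k).ncard = k := by
  have : {x : F | x ^ k = 1} = Polynomial.nthRootsFinset k (1 : F) := by
    ext x
    simp [Polynomial.mem_nthRootsFinset hk]
  rw [starterB, Set.ncard_image_of_injective _ embedPt_injective, this, Set.ncard_coe_finset,
    hζ.card_nthRootsFinset]

lemma dilation_mem_stabilizer (hk : 0 < k) {u : Fˣ} (hu : u ∈ rootsOfUnity k F) :
    dilation u ∈ stabilizer PGL(2, F) (starterB F k) := by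
  rw [mem_stabilizer_set' (starterB_finite hk)]
  rintro _ ⟨x, hx : x ^ k = 1, rfl⟩
  rw [dilation_smul_embedPt, mem_starterB]
  exact ⟨_, by rw [mul_pow, (mem_rootsOfUnity' k u).1 hu, hx, mul_one], rfl⟩

lemma inversion_mem_stabilizer (hk : 0 < k) {u : Fˣ} (hu : u ∈ rootsOfUnity k F) :
    inversion u ∈ stabilizer PGL(2, F) (starterB F k) := by
  rw [mem_stabilizer_set' (starterB_finite hk)]
  rintro _ ⟨x, hx : x ^ k = 1, rfl⟩
  have hx0 : x ≠ 0 := by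
    rintro rfl
    simp [hk.ne'] at hx
  rw [inversion_smul_embedPt u hx0, mem_starterB]
  exact ⟨_, by rw [div_pow, (mem_rootsOfUnity' k u).1 hu, hx, div_one], rfl⟩

lemma fixes_or_swaps_zero_infty_of_mem_stabilizer (hζ : IsPrimitiveRoot ζ k) (hk : 2 < k)
    (hk1 : (k : F) ≠ 1) {g : PGL(2, F)} (hg : g ∈ stabilizer PGL(2, F) (starterB F k)) :
    (g • inftyPt F = inftyPt F ∧ g • embedPt F 0 = embedPt F 0) ∨
      (g • inftyPt F = embedPt F 0 ∧ g • embedPt F 0 = inftyPt F) := by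
  obtain ⟨A, rfl⟩ := mk_surjective g
  have hdet : A 0 0 * A 1 1 - A 0 1 * A 1 0 ≠ 0 := det_fin_two A.1 ▸ A.det_ne_zero
  have pow_eq_pow (x : F) (hx : x ^ k = 1) :
      (A 0 0 * x + A 0 1) ^ k = (A 1 0 * x + A 1 1) ^ k := by
    obtain ⟨y, hy, hxy⟩ := (mem_stabilizer_set.1 hg (embedPt F x)).2 ⟨x, hx, rfl⟩
    rw [mk_smul_embedPt_eq_embedPt_iff.1 hxy.symm, mul_pow, show y ^ k = 1 from hy, one_mul]
  simpa [mk_smul_inftyPt_eq_inftyPt_iff, mk_smul_embedPt_eq_embedPt_iff,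
    mk_smul_inftyPt_eq_embedPt_iff, mk_smul_embedPt_eq_inftyPt_iff, and_comm] using
    diagonal_or_antidiagonal_of_pow_eq_pow hζ hk hk1 hdet pow_eq_pow

lemma mem_stabilizer_starterB_iff (hζ : IsPrimitiveRoot ζ k) (hk : 2 < k) (hk1 : (k : F) ≠ 1)
    {g : PGL(2, F)} : g ∈ stabilizer PGL(2, F) (starterB F k) ↔
      ∃ u ∈ rootsOfUnity k F, dilation u = g ∨ inversion u = g := by
  have hk0 : 0 < k := by omega
  refine ⟨fun hg ↦ ?_, ?_⟩
  · obtain ⟨u, hu, hgu⟩ := (mem_stabilizer_set.1 hg (embedPt F 1)).2 ⟨1, one_pow k, rfl⟩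
    let u' : Fˣ := Units.ofPowEqOne u k hu hk0.ne'
    refine ⟨u', (mem_rootsOfUnity' k u').2 hu, ?_⟩
    refine (fixes_or_swaps_zero_infty_of_mem_stabilizer hζ hk hk1 hg).imp ?_ ?_ <;>
      rintro ⟨g_infty, g_zero⟩ <;> apply projGenLinGroup_ext
    · rw [dilation_smul_inftyPt, g_infty]
    · rw [dilation_smul_embedPt, mul_zero, g_zero]
    · rw [dilation_smul_embedPt, mul_one, ← hgu]
      rfl
    · rw [inversion_smul_inftyPt, g_infty]
    · rw [inversion_smul_embedPt_zero, g_zero]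
    · rw [inversion_smul_embedPt u' one_ne_zero, div_one, ← hgu]
      rfl
  · rintro ⟨u, hu, rfl | rfl⟩
    exacts [dilation_mem_stabilizer hk0 hu, inversion_mem_stabilizer hk0 hu]

lemma card_stabilizer_starterB (hζ : IsPrimitiveRoot ζ k) (hk : 2 < k) (hk1 : (k : F) ≠ 1) :
    Nat.card (stabilizer PGL(2, F) (starterB F k)) = 2 * k := by
  have : NeZero k := ⟨by omega⟩
  let U : Set Fˣ := rootsOfUnity k F
  have hU : U.ncard = k := by rw [← Nat.card_coe_set_eq]; exact hζ.card_rootsOfUnity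
  have hUfin : U.Finite := Set.finite_of_ncard_ne_zero (by rw [hU]; exact NeZero.ne k)
  have stabilizer_eq : (stabilizer PGL(2, F) (starterB F k) : Set PGL(2, F)) =
      dilation '' U ∪ inversion '' U := by
    ext g
    simp only [SetLike.mem_coe, mem_stabilizer_starterB_iff hζ hk hk1, and_or_left, exists_or]
    rfl
  have disjoint : Disjoint (dilation '' U) (inversion '' U) := by
    rw [Set.disjoint_left]
    rintro _ ⟨u, -, rfl⟩ ⟨v, -, h⟩
    exact dilation_ne_inversion u v h.symm
  calc _ = (dilation '' U ∪ inversion '' U).ncard := by rw [← stabilizer_eq]; rfl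
    _ = U.ncard + U.ncard := by
      rw [Set.ncard_union_eq disjoint (hUfin.image _) (hUfin.image _),
        Set.ncard_image_of_injective _ dilation_injective,
        Set.ncard_image_of_injective _ inversion_injective]
    _ = 2 * k := by rw [hU, two_mul]

theorem designBlocks_eq_orbit (hk : 0 < k) {u : Fˣ} (hu : u ∈ rootsOfUnity k F)
    (hsq : ∀ x : F, IsSquare x ∨ IsSquare (u * x)) :
    designBlocks F k = orbit PGL(2, F) (starterB F k) := by
  have mem_designBlocks_iff (S : Set (Projectivization F (Fin 2 → F))) : S ∈ designBlocks F k ↔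
      ∃ g : SpecialLinearGroup (Fin 2) F, SpecialLinearGroup.toPGL g • starterB F k = S := by
    simp only [designBlocks, Set.mem_ofPred_eq, eq_comm (a := S), funext (mapSL_eq_toPGL_smul _)]
    rfl
  ext S
  rw [mem_designBlocks_iff]
  refine ⟨fun ⟨g, hg⟩ ↦ ⟨_, hg⟩, ?_⟩
  rintro ⟨g, rfl⟩
  obtain ⟨M, rfl⟩ := mk_surjective g
  rcases hsq M.det with hM | hM
  · obtain ⟨g, hg⟩ := exists_toPGL_eq_mk_of_isSquare_det hM
    exact ⟨g, by rw [hg]⟩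
  · let D : GL (Fin 2) F := .mkOfDetNeZero !![(u : F), 0; 0, 1] (by simp)
    have det_D : D.det = u := Units.ext (by simp [D, GeneralLinearGroup.mkOfDetNeZero])
    have hMD : IsSquare ((M * D).det : F) := by rwa [map_mul, det_D, mul_comm, Units.val_mul]
    obtain ⟨g, hg⟩ := exists_toPGL_eq_mk_of_isSquare_det hMD
    have smul_D : mk D • starterB F k = starterB F k :=
      mem_stabilizer_iff.1 (dilation_mem_stabilizer hk hu)
    exact ⟨g, by rw [hg, map_mul, mul_smul, smul_D]⟩

end StarterBlock

section FiniteField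

variable {K : Type*} [Field K] {ζ : K} {k : ℕ}

lemma exists_isPrimitiveRoot_of_dvd_card_sub_one [Fintype K] (hk : k ∣ Fintype.card K - 1) :
    ∃ ζ : K, IsPrimitiveRoot ζ k := by
  classical
  obtain ⟨g, hg⟩ := IsCyclic.exists_generator (α := Kˣ)
  have hg : IsPrimitiveRoot g (Fintype.card K - 1) := by
    rw [← Fintype.card_units, ← Nat.card_eq_fintype_card,
      ← orderOf_eq_card_of_forall_mem_zpowers hg]
    exact IsPrimitiveRoot.orderOf g
  obtain ⟨e, he⟩ := hk
  have card_pos : 0 < Fintype.card K - 1 := Nat.sub_pos_of_lt Fintype.one_lt_card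
  exact ⟨_, IsPrimitiveRoot.coe_units_iff.2 (hg.pow card_pos (he.trans (mul_comm k e)))⟩

lemma isSquare_mul_of_not_isSquare [Finite K] {x y : K} (hx : ¬IsSquare x) (hy : ¬IsSquare y) :
    IsSquare (x * y) := by
  classical
  have := Fintype.ofFinite K
  have hxy : x * y ≠ 0 := mul_ne_zero (fun h ↦ hx (h ▸ .zero)) fun h ↦ hy (h ▸ .zero)
  rw [← quadraticChar_one_iff_isSquare hxy, map_mul,
    quadraticChar_neg_one_iff_not_isSquare.2 hx, quadraticChar_neg_one_iff_not_isSquare.2 hy]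
  rfl

lemma not_isSquare_of_isPrimitiveRoot [Fintype K] (hζ : IsPrimitiveRoot ζ k) (hK : ringChar K ≠ 2)
    (he : Odd ((Fintype.card K - 1) / k)) : ¬IsSquare ζ := by
  have hk : k ≠ 0 := by
    rintro rfl
    simp at he
  have card_odd := FiniteField.odd_card_of_char_ne_two hK
  rw [FiniteField.isSquare_iff hK (hζ.ne_zero hk), hζ.pow_eq_one_iff_dvd]
  rintro ⟨m, hm⟩
  have card_sub_one : Fintype.card K - 1 = k * (2 * m) := by
    rw [mul_left_comm, ← hm]
    omega
  rw [card_sub_one, Nat.mul_div_cancel_left _ (Nat.pos_of_ne_zero hk)] at he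
  exact Nat.not_odd_iff_even.2 (even_two_mul m) he

end FiniteField

lemma natCast_ne_one_of_lt_ringChar {R : Type*} [NonAssocRing R] {k : ℕ} (hk : 1 < k)
    (hkp : k < ringChar R) : (k : R) ≠ 1 := fun h ↦
  hk.ne' <| CharP.natCast_injOn_Iio R (ringChar R) hkp (hk.trans hkp) (by simpa using h)

lemma descFactorial_three (k : ℕ) : k.descFactorial 3 = (k - 1) * (k - 2) / 2 * (2 * k) := by
  have two_dvd : 2 ∣ (k - 1) * (k - 2) := (Nat.even_mul_pred_self (k - 1)).two_dvd
  rw [← mul_assoc, Nat.div_mul_cancel two_dvd]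
  simp only [Nat.descFactorial_succ, Nat.descFactorial_zero, Nat.sub_zero]
  ring

theorem stmt_0_general (F : Type) [Field F] (k : ℕ) (ζ : F) (hζ : IsPrimitiveRoot ζ k)
    (hk : 2 < k) (hk1 : (k : F) ≠ 1) (hsq : ∀ x : F, IsSquare x ∨ IsSquare (ζ * x)) :
    isThreeDesign F k ((k - 1) * (k - 2) / 2) := by
  have hk0 : 0 < k := by omega
  have : NeZero k := ⟨hk0.ne'⟩
  have blocks_eq := designBlocks_eq_orbit hk0 hζ.toRootsOfUnity.2 hsq
  have two_le : 2 ≤ (k - 1) * (k - 2) :=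
    Nat.mul_le_mul (show 2 ≤ k - 1 by omega) (show 1 ≤ k - 2 by omega)
  refine ⟨Nat.div_pos two_le two_pos, fun T hT ↦ ?_⟩
  have count := ncard_orbit_superset_mul_card_stabilizer
    (bijective_projGenLinGroup_smul_triple (F := F)) (starterB_finite hk0) hT
  rw [← blocks_eq, card_stabilizer_starterB hζ hk hk1, ncard_starterB hζ hk0,
    descFactorial_three] at count
  exact Nat.eq_of_mul_eq_mul_right (by omega) count

/-- Theorem 2.5(i): if `e = (q-1)/k` is odd and `k` is less than the characteristic,
then `(q,k)` gives a `3-(q+1, k, (k-1)(k-2)/2)` design. -/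
theorem stmt_0 (F : Type) [Field F] [Fintype F] [DecidableEq F]
    (q k : ℕ) (hq : Fintype.card F = q) (hqodd : Odd q) (hq4 : q % 4 = 1)
    (hkdvd : k ∣ q - 1) (hk3 : 3 < k) (hkq : k < q - 1)
    (he : Odd ((q - 1) / k)) (hkp : k < ringChar F) :
    isThreeDesign F k ((k - 1) * (k - 2) / 2) := by
  subst hq
  obtain ⟨ζ, hζ⟩ := exists_isPrimitiveRoot_of_dvd_card_sub_one hkdvd
  have ζ_not_sq : ¬IsSquare ζ := not_isSquare_of_isPrimitiveRoot hζ (by omega) he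
  exact stmt_0_general F k ζ hζ (by omega) (natCast_ne_one_of_lt_ringChar (by omega) hkp) fun x ↦
    or_iff_not_imp_left.2 (isSquare_mul_of_not_isSquare ζ_not_sq)
end
end

section
/- Let q be a prime power with q ≡ 1 (mod 4) and let α be a primitive root (generator of the multiplicative group) of F_q. Then the action of PSL(2,q) on the set of 3-element subsets of PG(1,q) has exactly two orbits, with representatives T₊ = {∞, 0, 1} and T₋ = {∞, 0, α}. Moreover, the setwise stabilizer of T₊ (respectively T₋) in PSL(2,q) induces the full symmetric group of degree 3 on T₊ (respectively T₋). -/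
/-!
Setting: `F` is a finite field of order `q`. The projective line `PG(1,q)` is
modelled as `Projectivization F (Fin 2 → F)`. Since scalar matrices act trivially
on the projective line, the images of a set under all elements of `SL(2,F)` form
exactly its `PSL(2,F)`-orbit; `mapSL g` is the map of the projective line induced
by `g : SL(2,F)`. For `k ∣ q - 1`, the unique subgroup of order `k` of `Fˣ` is the
set of `k`-th roots of unity `{x : F | x ^ k = 1}`, embedded into the projective
line via `x ↦ [x : 1]`. `(q, k)` gives a 3-design iff there is `lam > 0` such that
every 3-subset of the projective line lies in exactly `lam` blocks of the orbit.
-/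

noncomputable section

open Matrix

/-- The 3-subset `{∞, 0, 1}` of the projective line. -/
def Tplus (F : Type) [Field F] : Set (Projectivization F (Fin 2 → F)) :=
  {inftyPt F, embedPt F 0, embedPt F 1}

/-- The 3-subset `{∞, 0, α}` of the projective line. -/
def Tminus (F : Type) [Field F] (a : F) : Set (Projectivization F (Fin 2 → F)) :=
  {inftyPt F, embedPt F 0, embedPt F a}

/-!
For three vectors `u₀, u₁, u₂` of the plane let `Δ = [u₀,u₁][u₁,u₂][u₂,u₀]`, where `[u,v]` is the
determinant. Rescaling the vectors multiplies `Δ` by a nonzero square, so its square class is an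
invariant of three points of the projective line under `SL₂`. It is a complete invariant of ordered
triples of distinct points: by the Plücker relation the rescaled vectors
`[u₁,u₂]u₀`, `[u₂,u₀]u₁`, `[u₀,u₁]u₂` sum to zero, and the first two have determinant `Δ`, so
matching them with those of a second triple gives a linear map of determinant `Δ' / Δ`, which can be
rescaled into `SL₂` when this quotient is a square. Permuting the points changes `Δ` by a sign;
when `-1` is a square, the square class therefore classifies unordered triples as well, and
stabilizers induce all permutations.
-/

open Function
open scoped LinearAlgebra.Projectivization MatrixGroups Pointwise

lemma isSquare_mul_trans {M : Type*} [CommGroupWithZero M] {a b c : M} (hb : b ≠ 0)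
    (hab : IsSquare (a * b)) (hbc : IsSquare (b * c)) : IsSquare (a * c) := by
  have : a * c = a * b * (b * c) / (b * b) := by field_simp
  exact this ▸ (hab.mul hbc).div (.mul_self b)

lemma isSquare_or_isSquare_mul_of_mem_zpowers {G : Type*} [Group G] {a x : G}
    (hx : x ∈ Subgroup.zpowers a) : IsSquare x ∨ IsSquare (a * x) := by
  obtain ⟨n, rfl⟩ := hx
  refine (Int.even_or_odd n).imp (fun hn ↦ hn.isSquare_zpow a) fun hn ↦ ?_
  simpa only [← _root_.zpow_one_add] using (odd_one.add_odd hn).isSquare_zpow a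

lemma exists_perm_comp_eq_of_range_eq {ι α : Type*} {x y : ι → α} (hx : Injective x)
    (hy : Injective y) (hxy : Set.range x = Set.range y) : ∃ σ : Equiv.Perm ι, x ∘ σ = y :=
  ⟨(Equiv.ofInjective y hy).trans
      ((Equiv.setCongr hxy.symm).trans (Equiv.ofInjective x hx).symm),
    funext fun i ↦ by simp [Equiv.apply_ofInjective_symm]⟩

lemma exists_injective_range_eq_of_ncard {α : Type*} {n : ℕ} [NeZero n] {S : Set α}
    (hS : S.ncard = n) : ∃ x : Fin n → α, Injective x ∧ Set.range x = S := by
  have : Finite S := Set.finite_of_ncard_ne_zero (hS ▸ NeZero.ne n)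
  let e := Finite.equivFinOfCardEq hS
  exact ⟨Subtype.val ∘ e.symm, Subtype.val_injective.comp e.symm.injective, by
    rw [e.symm.surjective.range_comp, Subtype.range_coe]⟩

section Vectors

variable {R : Type*} [CommRing R]

/-- The discriminant `[u₀,u₁][u₁,u₂][u₂,u₀]` of three plane vectors, the homogeneous analogue of
the Vandermonde product. The index addition is cyclic. -/
def tripleDisc (u : Fin 3 → Fin 2 → R) : R :=
  ∏ i, (of ![u i, u (i + 1)]).det

variable (R) in
/-- The standard basis vectors and the negative of their sum: a fixed triple of vectors summing to
zero, with which every other triple is compared. -/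
def triangleVertex : Fin 3 → Fin 2 → R :=
  ![![1, 0], ![0, 1], ![-1, -1]]

/-- The matrix with columns `[u₁,u₂]u₀` and `[u₂,u₀]u₁`. It carries the fixed triple
`triangleVertex` to multiples of the `u i`. -/
def triangleFrame (u : Fin 3 → Fin 2 → R) : Matrix (Fin 2) (Fin 2) R :=
  (of ![(of ![u 1, u 2]).det • u 0, (of ![u 2, u 0]).det • u 1])ᵀ

lemma det_of_pair (v w : Fin 2 → R) : (of ![v, w]).det = v 0 * w 1 - v 1 * w 0 :=
  det_fin_two _

lemma tripleDisc_eq_mul (u : Fin 3 → Fin 2 → R) :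
    tripleDisc u = (of ![u 0, u 1]).det * (of ![u 1, u 2]).det * (of ![u 2, u 0]).det :=
  Fin.prod_univ_three _

lemma tripleDisc_smul (a : Fin 3 → R) (u : Fin 3 → Fin 2 → R) :
    tripleDisc (fun i ↦ a i • u i) = (∏ i, a i) ^ 2 * tripleDisc u := by
  simp only [tripleDisc_eq_mul, det_of_pair, Fin.prod_univ_three, Pi.smul_apply, smul_eq_mul]
  ring

lemma tripleDisc_mulVec (A : Matrix (Fin 2) (Fin 2) R) (u : Fin 3 → Fin 2 → R) :
    tripleDisc (fun i ↦ A *ᵥ u i) = A.det ^ 3 * tripleDisc u := by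
  have det_mulVec_pair (v w : Fin 2 → R) :
      (of ![A *ᵥ v, A *ᵥ w]).det = A.det * (of ![v, w]).det := by
    simp only [det_of_pair, det_fin_two A, mulVec, dotProduct, Fin.sum_univ_two]
    ring
  simp only [tripleDisc_eq_mul, det_mulVec_pair]
  ring

lemma tripleDisc_eq_neg_det_projVandermonde (u : Fin 3 → Fin 2 → R) :
    tripleDisc u = -(projVandermonde (u · 1) (u · 0)).det := by
  have hprod : (projVandermonde (u · 1) (u · 0)).det =
      (of ![u 0, u 1]).det * (of ![u 0, u 2]).det * (of ![u 1, u 2]).det := by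
    simp [det_projVandermonde, Fin.prod_univ_succ, Fin.prod_Ioi_succ, det_of_pair, mul_comm (u _ 1)]
  rw [hprod, tripleDisc_eq_mul]
  simp only [det_of_pair]
  ring

lemma tripleDisc_comp_perm (u : Fin 3 → Fin 2 → R) (σ : Equiv.Perm (Fin 3)) :
    tripleDisc (u ∘ σ) = Equiv.Perm.sign σ * tripleDisc u := by
  rw [tripleDisc_eq_neg_det_projVandermonde, tripleDisc_eq_neg_det_projVandermonde, mul_neg,
    ← det_permute]
  rfl

lemma pluecker_relation (u v w : Fin 2 → R) :
    (of ![v, w]).det • u + (of ![w, u]).det • v + (of ![u, v]).det • w = 0 := by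
  refine funext (Fin.forall_fin_two.mpr ⟨?_, ?_⟩) <;>
    simp only [det_of_pair, Pi.add_apply, Pi.smul_apply, smul_eq_mul, Pi.zero_apply] <;> ring

lemma det_triangleFrame (u : Fin 3 → Fin 2 → R) : (triangleFrame u).det = tripleDisc u := by
  rw [triangleFrame, det_transpose, tripleDisc_eq_mul]
  simp only [det_of_pair, Pi.smul_apply, smul_eq_mul]
  ring

lemma triangleFrame_mulVec (u : Fin 3 → Fin 2 → R) (i : Fin 3) :
    triangleFrame u *ᵥ triangleVertex R i = (of ![u (i + 1), u (i + 1 + 1)]).det • u i := by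
  have mulVec_eq (z : Fin 2 → R) : triangleFrame u *ᵥ z =
      z 0 • (of ![u 1, u 2]).det • u 0 + z 1 • (of ![u 2, u 0]).det • u 1 := by
    rw [triangleFrame, mulVec_transpose, vecMul_eq_sum, Fin.sum_univ_two]
    rfl
  rw [mulVec_eq]
  fin_cases i
  · simp [triangleVertex]
  · simp [triangleVertex]
  · simpa [triangleVertex, add_comm] using
      neg_eq_of_add_eq_zero_right (pluecker_relation (u 0) (u 1) (u 2))

end Vectors

section Points

variable {K : Type*} [Field K] {x y : Fin 3 → ℙ K (Fin 2 → K)}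

lemma exists_specialLinear_smul_eq_smul {u v : Fin 3 → Fin 2 → K} (hu : tripleDisc u ≠ 0)
    (hv : tripleDisc v ≠ 0) (huv : IsSquare (tripleDisc u * tripleDisc v)) :
    ∃ g : SL(2, K), ∀ i, ∃ c : K, g • u i = c • v i := by
  obtain ⟨s, hs⟩ := huv
  have hs0 : s ≠ 0 := by
    rintro rfl
    simp_all
  set A := triangleFrame u
  have hA : IsUnit A.det := by rwa [isUnit_iff_ne_zero, det_triangleFrame]
  let G := (tripleDisc u / s) • (triangleFrame v * A⁻¹)
  have hG : G.det = 1 := by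
    simp only [G, A, det_smul, det_mul, det_nonsing_inv, Ring.inverse_eq_inv', det_triangleFrame,
      Fintype.card_fin]
    field_simp
    rw [hs, sq]
  refine ⟨⟨G, hG⟩, fun i ↦ ?_⟩
  set a := (of ![u (i + 1), u (i + 1 + 1)]).det
  set b := (of ![v (i + 1), v (i + 1 + 1)]).det
  have ha : a ≠ 0 := Finset.prod_ne_zero_iff.mp hu (i + 1) (Finset.mem_univ _)
  have hG_frame : G *ᵥ (a • u i) = (tripleDisc u / s * b) • v i := by
    rw [← triangleFrame_mulVec, mulVec_mulVec, smul_mul, Matrix.mul_assoc, nonsing_inv_mul _ hA,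
      Matrix.mul_one, smul_mulVec, triangleFrame_mulVec, smul_smul]
  exact ⟨a⁻¹ * (tripleDisc u / s * b), by
    rw [← smul_smul, ← hG_frame, mulVec_smul, inv_smul_smul₀ ha]; rfl⟩

/-- The discriminant of three points of the projective line, computed from the chosen
representatives. Only its square class is independent of that choice. -/
def pointDisc (x : Fin 3 → ℙ K (Fin 2 → K)) : K :=
  tripleDisc fun i ↦ (x i).rep

lemma exists_pointDisc_mk_eq {u : Fin 3 → Fin 2 → K} (hu : ∀ i, u i ≠ 0) :
    ∃ c : Kˣ, pointDisc (fun i ↦ .mk K (u i) (hu i)) = (c : K) ^ 2 * tripleDisc u := by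
  choose a ha using fun i ↦ Projectivization.exists_smul_eq_mk_rep K (u i) (hu i)
  refine ⟨∏ i, a i, ?_⟩
  simp only [pointDisc, ← ha, Units.smul_def, tripleDisc_smul, Units.coe_prod]

lemma pointDisc_ne_zero_iff : pointDisc x ≠ 0 ↔ Injective x := by
  have det_rep_ne_zero_iff (p q : ℙ K (Fin 2 → K)) : (of ![p.rep, q.rep]).det ≠ 0 ↔ p ≠ q := by
    rw [← Projectivization.linearIndependent_pair_iff_ne, ← isUnit_iff_ne_zero,
      ← isUnit_iff_isUnit_det, ← linearIndependent_rows_iff_isUnit]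
    rfl
  simp only [pointDisc, tripleDisc, Finset.prod_ne_zero_iff, Finset.mem_univ, true_imp_iff,
    det_rep_ne_zero_iff]
  refine ⟨fun h i j hij ↦ ?_, fun h i ↦ h.ne (by simp)⟩
  have := h 0; have := h 1; have := h 2
  fin_cases i <;> fin_cases j <;> simp_all

theorem isSquare_pointDisc_mul_smul (g : SL(2, K)) (x : Fin 3 → ℙ K (Fin 2 → K)) :
    IsSquare (pointDisc x * pointDisc (g • x)) := by
  have hne (i : Fin 3) : g • (x i).rep ≠ 0 :=
    (smul_ne_zero_iff_ne g).mpr (x i).rep_nonzero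
  have hgx : g • x = fun i ↦ .mk K (g • (x i).rep) (hne i) := by
    funext i
    rw [← Projectivization.smul_mk g (x i).rep_nonzero, Projectivization.mk_rep, Pi.smul_apply]
  have hdisc : tripleDisc (fun i ↦ g • (x i).rep) = pointDisc x := by
    refine (tripleDisc_mulVec g.1 _).trans ?_
    rw [g.det_coe, one_pow, one_mul, pointDisc]
  obtain ⟨c, hc⟩ := exists_pointDisc_mk_eq hne
  exact ⟨c * pointDisc x, by rw [hgx, hc, hdisc]; ring⟩

theorem exists_smul_eq_iff_isSquare (hx : Injective x) (hy : Injective y) :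
    (∃ g : SL(2, K), g • x = y) ↔ IsSquare (pointDisc x * pointDisc y) := by
  refine ⟨fun ⟨g, hg⟩ ↦ hg ▸ isSquare_pointDisc_mul_smul g x, fun h ↦ ?_⟩
  obtain ⟨g, hg⟩ := exists_specialLinear_smul_eq_smul (pointDisc_ne_zero_iff.mpr hx)
    (pointDisc_ne_zero_iff.mpr hy) h
  refine ⟨g, funext fun i ↦ ?_⟩
  obtain ⟨c, hc⟩ := hg i
  rw [Pi.smul_apply, ← (x i).mk_rep, ← (y i).mk_rep, Projectivization.smul_mk,
    Projectivization.mk_eq_mk_iff']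
  exact ⟨c, hc.symm⟩

theorem isSquare_pointDisc_mul_of_range_eq (hneg : IsSquare (-1 : K)) (hx : Injective x)
    (hy : Injective y) (hxy : Set.range x = Set.range y) :
    IsSquare (pointDisc x * pointDisc y) := by
  obtain ⟨σ, rfl⟩ := exists_perm_comp_eq_of_range_eq hx hy hxy
  have hsign : IsSquare ((Equiv.Perm.sign σ : ℤ) : K) := by
    rcases Int.units_eq_one_or (Equiv.Perm.sign σ) with h | h <;> simp [h, hneg]
  have hdisc : pointDisc (x ∘ σ) = Equiv.Perm.sign σ * pointDisc x :=
    tripleDisc_comp_perm (fun i ↦ (x i).rep) σ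
  rw [hdisc, mul_left_comm]
  exact hsign.mul (.mul_self _)

theorem exists_smul_range_eq_iff_isSquare (hneg : IsSquare (-1 : K)) (hx : Injective x)
    (hy : Injective y) :
    (∃ g : SL(2, K), g • Set.range x = Set.range y) ↔ IsSquare (pointDisc x * pointDisc y) := by
  constructor
  · rintro ⟨g, hg⟩
    have hgx : Injective (g • x) := (MulAction.injective g).comp hx
    have hrange : Set.range (g • x) = Set.range y := (Set.smul_set_range g x).symm.trans hg
    exact isSquare_mul_trans (pointDisc_ne_zero_iff.mpr hgx) (isSquare_pointDisc_mul_smul g x)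
      (isSquare_pointDisc_mul_of_range_eq hneg hgx hy hrange)
  · rw [← exists_smul_eq_iff_isSquare hx hy]
    rintro ⟨g, rfl⟩
    exact ⟨g, Set.smul_set_range g x⟩

theorem exists_smul_eq_perm (hneg : IsSquare (-1 : K)) {S : Set (ℙ K (Fin 2 → K))}
    (hS : S.ncard = 3) (σ : Equiv.Perm S) : ∃ g : SL(2, K), ∀ t : S, g • t.1 = (σ t).1 := by
  obtain ⟨x, hx, rfl⟩ := exists_injective_range_eq_of_ncard hS
  let y := Subtype.val ∘ σ ∘ Set.rangeFactorization x
  have hy : Injective y := Subtype.val_injective.comp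
    (σ.injective.comp (Set.rangeFactorization_injective.mpr hx))
  have hrange : Set.range y = Set.range x := by
    rw [(σ.surjective.comp Set.rangeFactorization_surjective).range_comp, Subtype.range_coe]
  obtain ⟨g, hg⟩ := (exists_smul_eq_iff_isSquare hx hy).mpr
    (isSquare_pointDisc_mul_of_range_eq hneg hx hy hrange.symm)
  refine ⟨g, ?_⟩
  rintro ⟨_, i, rfl⟩
  exact congrFun hg i

end Points

section StandardTriple

variable {F : Type} [Field F] {a : F}

/-- The ordered triple `∞, 0, a`, whose underlying set is `Tminus F a`. -/
def standardTriple (a : F) : Fin 3 → ℙ F (Fin 2 → F) :=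
  ![inftyPt F, embedPt F 0, embedPt F a]

lemma range_standardTriple (a : F) : Set.range (standardTriple a) = Tminus F a := by
  simp only [standardTriple, Tminus, range_cons, range_empty, Set.union_empty]
  rfl

lemma exists_pointDisc_standardTriple_eq (a : F) :
    ∃ c : Fˣ, pointDisc (standardTriple a) = (c : F) ^ 2 * a := by
  let u : Fin 3 → Fin 2 → F := ![![1, 0], ![0, 1], ![a, 1]]
  have hu : ∀ i, u i ≠ 0 := by
    intro i
    fin_cases i <;> simp [u]
  have hstd : standardTriple a = fun i ↦ .mk F (u i) (hu i) := by
    funext i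
    fin_cases i <;> rfl
  have hdisc : tripleDisc u = a := by
    simp [tripleDisc_eq_mul, det_of_pair, u]
  simpa only [hstd, hdisc] using exists_pointDisc_mk_eq hu

lemma isSquare_mul_pointDisc_standardTriple (a : F) :
    IsSquare (a * pointDisc (standardTriple a)) := by
  obtain ⟨c, hc⟩ := exists_pointDisc_standardTriple_eq a
  exact ⟨c * a, by rw [hc]; ring⟩

lemma standardTriple_injective (ha : a ≠ 0) : Injective (standardTriple a) := by
  obtain ⟨c, hc⟩ := exists_pointDisc_standardTriple_eq a
  simp [← pointDisc_ne_zero_iff, hc, ha]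

lemma ncard_Tminus (ha : a ≠ 0) : (Tminus F a).ncard = 3 := by
  rw [← range_standardTriple, Set.ncard_range_of_injective (standardTriple_injective ha),
    Nat.card_fin]

theorem exists_mapSL_image_Tminus_eq_range_iff (hneg : IsSquare (-1 : F)) (ha : a ≠ 0)
    {y : Fin 3 → ℙ F (Fin 2 → F)} (hy : Injective y) :
    (∃ g, mapSL g '' Tminus F a = Set.range y) ↔ IsSquare (a * pointDisc y) := by
  have hstd := standardTriple_injective ha
  have hdisc := isSquare_mul_pointDisc_standardTriple a
  rw [← range_standardTriple]
  refine (exists_smul_range_eq_iff_isSquare hneg hstd hy).trans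
    ⟨isSquare_mul_trans (pointDisc_ne_zero_iff.mpr hstd) hdisc, isSquare_mul_trans ha ?_⟩
  rwa [mul_comm]

theorem exists_mapSL_image_Tminus_eq_Tminus_iff {b : F} (hneg : IsSquare (-1 : F)) (ha : a ≠ 0)
    (hb : b ≠ 0) : (∃ g, mapSL g '' Tminus F a = Tminus F b) ↔ IsSquare (a * b) := by
  have hstd := standardTriple_injective hb
  have hdisc := isSquare_mul_pointDisc_standardTriple b
  rw [← range_standardTriple b, exists_mapSL_image_Tminus_eq_range_iff hneg ha hstd]
  refine ⟨fun h ↦ isSquare_mul_trans (pointDisc_ne_zero_iff.mpr hstd) h ?_,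
    fun h ↦ isSquare_mul_trans hb h hdisc⟩
  rwa [mul_comm]

end StandardTriple

section PrimitiveRoot

variable {F : Type*} [Field F] {α : Fˣ}

lemma isSquare_or_isSquare_primitiveRoot_mul (hα : ∀ x : Fˣ, x ∈ Subgroup.zpowers α) (x : F) :
    IsSquare x ∨ IsSquare (α * x) := by
  rcases eq_or_ne x 0 with rfl | hx
  · exact .inl .zero
  · exact (isSquare_or_isSquare_mul_of_mem_zpowers (hα (.mk0 x hx))).imp
      (fun h ↦ h.map (Units.coeHom F)) fun h ↦ h.map (Units.coeHom F)

lemma not_isSquare_primitiveRoot [Finite F] (hF : ringChar F ≠ 2)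
    (hα : ∀ x : Fˣ, x ∈ Subgroup.zpowers α) : ¬ IsSquare (α : F) := fun hsq ↦ by
  obtain ⟨x, hx⟩ := FiniteField.exists_nonsquare hF
  rcases isSquare_or_isSquare_primitiveRoot_mul hα x with h | h
  · exact hx h
  · exact hx (by simpa using h.div hsq)

end PrimitiveRoot

theorem stmt_2_general {F : Type} [Field F] {a : F} (hneg : IsSquare (-1 : F))
    (ha : ¬ IsSquare a) (hsq : ∀ x : F, IsSquare x ∨ IsSquare (a * x)) :
    (∀ S : Set (ℙ F (Fin 2 → F)), S.ncard = 3 →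
      (∃ g, mapSL g '' Tplus F = S) ∨ (∃ g, mapSL g '' Tminus F a = S))
    ∧ (¬ ∃ g, mapSL g '' Tplus F = Tminus F a)
    ∧ (∀ σ : Equiv.Perm (Tplus F), ∃ g, ∀ t : Tplus F, mapSL g t.1 = (σ t).1)
    ∧ (∀ σ : Equiv.Perm (Tminus F a), ∃ g, ∀ t : Tminus F a, mapSL g t.1 = (σ t).1) := by
  have ha0 : a ≠ 0 := fun h ↦ ha (h ▸ .zero)
  have hTplus : Tplus F = Tminus F 1 := rfl
  rw [hTplus]
  refine ⟨fun S hS ↦ ?_, ?_, exists_smul_eq_perm hneg (ncard_Tminus one_ne_zero),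
    exists_smul_eq_perm hneg (ncard_Tminus ha0)⟩
  · obtain ⟨y, hy, rfl⟩ := exists_injective_range_eq_of_ncard hS
    rw [exists_mapSL_image_Tminus_eq_range_iff hneg one_ne_zero hy,
      exists_mapSL_image_Tminus_eq_range_iff hneg ha0 hy, one_mul]
    exact hsq (pointDisc y)
  · rwa [exists_mapSL_image_Tminus_eq_Tminus_iff hneg one_ne_zero ha0, one_mul]

/-- Lemma 2.2: for `q ≡ 1 (mod 4)` there are exactly two `PSL(2,q)`-orbits on
3-subsets of the projective line, with representatives `{∞,0,1}` and `{∞,0,α}`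
(`α` a primitive root); moreover the setwise stabilizer of each representative
induces the full symmetric group on it. -/
theorem stmt_2 (F : Type) [Field F] [Fintype F] [DecidableEq F]
    (q : ℕ) (hq : Fintype.card F = q) (hq4 : q % 4 = 1)
    (α : Fˣ) (hα : ∀ x : Fˣ, x ∈ Subgroup.zpowers α) :
    (∀ S : Set (Projectivization F (Fin 2 → F)), S.ncard = 3 →
      (∃ g, mapSL g '' Tplus F = S) ∨ (∃ g, mapSL g '' Tminus F (α : F) = S))
    ∧ (¬ ∃ g, mapSL g '' Tplus F = Tminus F (α : F))
    ∧ (∀ σ : Equiv.Perm (Tplus F),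
        ∃ g, ∀ t : Tplus F, mapSL g t.1 = (σ t).1)
    ∧ (∀ σ : Equiv.Perm (Tminus F (α : F)),
        ∃ g, ∀ t : Tminus F (α : F), mapSL g t.1 = (σ t).1) := by
  exact stmt_2_general (FiniteField.isSquare_neg_one_iff.mpr (by omega))
    (not_isSquare_primitiveRoot (by rw [Ne, FiniteField.even_card_iff_char_two]; omega) hα)
    (isSquare_or_isSquare_primitiveRoot_mul hα)
end
end

section
/- Let q be a prime power with q ≡ 1 (mod 4), let α be a primitive root of F_q, and let O₊ and O₋ be the PSL(2,q)-orbits on 3-subsets of PG(1,q) containing {∞,0,1} and {∞,0,α}, respectively. Define Δ({z₁,z₂,z₃}) = χ((z₁−z₂)(z₂−z₃)(z₃−z₁)) for 3-subsets {z₁,z₂,z₃} of F_q, where χ is the quadratic residue character of F_q. Then Δ is well defined (independent of the ordering of z₁,z₂,z₃), and a 3-subset {z₁,z₂,z₃} of F_q lies in O₊ if and only if Δ({z₁,z₂,z₃}) = 1, and lies in O₋ if and only if Δ({z₁,z₂,z₃}) = −1. -/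
/-!
Setting: `F` is a finite field of order `q`. The projective line `PG(1,q)` is
modelled as `Projectivization F (Fin 2 → F)`. Since scalar matrices act trivially
on the projective line, the images of a set under all elements of `SL(2,F)` form
exactly its `PSL(2,F)`-orbit; `mapSL g` is the map of the projective line induced
by `g : SL(2,F)`. For `k ∣ q - 1`, the unique subgroup of order `k` of `Fˣ` is the
set of `k`-th roots of unity `{x : F | x ^ k = 1}`, embedded into the projective
line via `x ↦ [x : 1]`. `(q, k)` gives a 3-design iff there is `lam > 0` such that
every 3-subset of the projective line lies in exactly `lam` blocks of the orbit.
-/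

noncomputable section

open Matrix

/-!
To three vectors of the plane attach `B(v₀, v₁, v₂) = [v₀, v₁][v₁, v₂][v₂, v₀]`, where `[·, ·]` is
the determinant. It is `SL(2)`-invariant, and rescaling the vectors multiplies it by a square, so
its square class is an invariant of an ordered triple of points of the projective line. The relation
`[v₁, v₂]v₀ + [v₂, v₀]v₁ + [v₀, v₁]v₂ = 0` shows that this invariant separates the orbits of ordered
triples of distinct points. Reordering changes `B` at most by a sign, which is harmless when `-1` is
a square. Finally, `B` takes the value `a` on `(∞, 0, a)` and the value
`(z₀ - z₁)(z₁ - z₂)(z₂ - z₀)` on an affine triple.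
-/

section AreaForm

variable {R : Type*} [CommRing R]

/-- The determinant `[v, w]` of two vectors of the plane, the basic `SL(2)`-invariant of a pair. -/
def areaForm (v w : Fin 2 → R) : R := v 0 * w 1 - v 1 * w 0

/-- The product `[v₀, v₁][v₁, v₂][v₂, v₀]` of the determinants of three vectors of the plane taken
cyclically; its square class is the invariant of the ordered triple of points they span. -/
def cyclicAreaProduct (v : Fin 3 → Fin 2 → R) : R :=
  areaForm (v 0) (v 1) * (areaForm (v 1) (v 2) * areaForm (v 2) (v 0))

lemma areaForm_smul_smul (a b : R) (v w : Fin 2 → R) :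
    areaForm (a • v) (b • w) = a * b * areaForm v w := by
  simp only [areaForm, Pi.smul_apply, smul_eq_mul]
  ring

lemma areaForm_mulVec (A : Matrix (Fin 2) (Fin 2) R) (v w : Fin 2 → R) :
    areaForm (A *ᵥ v) (A *ᵥ w) = A.det * areaForm v w := by
  simp only [areaForm, mulVec, dotProduct, Fin.sum_univ_two, det_fin_two]
  ring

lemma areaForm_smul_add_cyclic (u v w : Fin 2 → R) :
    areaForm v w • u + areaForm w u • v + areaForm u v • w = 0 := by
  refine funext (Fin.forall_fin_two.2 ?_)
  simp only [areaForm, Pi.add_apply, Pi.smul_apply, smul_eq_mul, Pi.zero_apply]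
  constructor <;> ring

lemma cyclicAreaProduct_smul (c : Fin 3 → R) (v : Fin 3 → Fin 2 → R) :
    cyclicAreaProduct (fun i => c i • v i) = (c 0 * c 1 * c 2) ^ 2 * cyclicAreaProduct v := by
  simp only [cyclicAreaProduct, areaForm_smul_smul]
  ring

lemma cyclicAreaProduct_mulVec (A : Matrix (Fin 2) (Fin 2) R) (v : Fin 3 → Fin 2 → R) :
    cyclicAreaProduct (fun i => A *ᵥ v i) = A.det ^ 3 * cyclicAreaProduct v := by
  simp only [cyclicAreaProduct, areaForm_mulVec]
  ring

lemma cyclicAreaProduct_eq_sq_mul_of_mulVec_eq_smul {v w : Fin 3 → Fin 2 → R}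
    {g : SpecialLinearGroup (Fin 2) R} {c : Fin 3 → R} (h : ∀ i, g.1 *ᵥ v i = c i • w i) :
    cyclicAreaProduct v = (c 0 * c 1 * c 2) ^ 2 * cyclicAreaProduct w := by
  rw [← cyclicAreaProduct_smul, ← funext h, cyclicAreaProduct_mulVec, g.2, one_pow, one_mul]

lemma cyclicAreaProduct_eq_det_projVandermonde (v : Fin 3 → Fin 2 → R) :
    cyclicAreaProduct v = (projVandermonde (fun i => v i 0) (fun i => v i 1)).det := by
  have Ioi_zero : Finset.Ioi (0 : Fin 3) = {1, 2} := rfl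
  have Ioi_one : Finset.Ioi (1 : Fin 3) = {2} := rfl
  have Ioi_two : Finset.Ioi (2 : Fin 3) = ∅ := rfl
  rw [det_projVandermonde, Fin.prod_univ_three, Ioi_zero, Ioi_one, Ioi_two,
    Finset.prod_pair (by decide), Finset.prod_singleton, Finset.prod_empty]
  simp only [cyclicAreaProduct, areaForm]
  ring

lemma cyclicAreaProduct_comp_perm (v : Fin 3 → Fin 2 → R) (σ : Equiv.Perm (Fin 3)) :
    cyclicAreaProduct (v ∘ σ) = Equiv.Perm.sign σ * cyclicAreaProduct v := by
  simp only [cyclicAreaProduct_eq_det_projVandermonde]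
  exact det_permute σ (projVandermonde (fun i => v i 0) (fun i => v i 1))

lemma injective_of_cyclicAreaProduct_ne_zero {v : Fin 3 → Fin 2 → R}
    (hv : cyclicAreaProduct v ≠ 0) : Function.Injective v := by
  intro i j hij
  by_contra hne
  refine hv ?_
  rw [cyclicAreaProduct_eq_det_projVandermonde]
  refine det_zero_of_row_eq hne ?_
  ext k
  simp only [projVandermonde_apply, hij]

lemma cyclicAreaProduct_affine (z : Fin 3 → R) :
    cyclicAreaProduct (fun i => ![z i, 1]) = (z 0 - z 1) * ((z 1 - z 2) * (z 2 - z 0)) := by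
  simp [cyclicAreaProduct, areaForm]

lemma cyclicAreaProduct_infty_zero (a : R) :
    cyclicAreaProduct ![![1, 0], ![0, 1], ![a, 1]] = a := by
  simp [cyclicAreaProduct, areaForm]

lemma mul_sub_cyclic_comp_perm (z : Fin 3 → R) (σ : Equiv.Perm (Fin 3)) :
    (z (σ 0) - z (σ 1)) * ((z (σ 1) - z (σ 2)) * (z (σ 2) - z (σ 0))) =
      Equiv.Perm.sign σ * ((z 0 - z 1) * ((z 1 - z 2) * (z 2 - z 0))) := by
  rw [← cyclicAreaProduct_affine, ← cyclicAreaProduct_comp_perm,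
    ← cyclicAreaProduct_affine fun i => z (σ i)]
  rfl

lemma exists_specialLinearGroup_mulVec_eq {v₀ v₁ w₀ w₁ : Fin 2 → R} (hv : IsUnit (areaForm v₀ v₁))
    (hvw : areaForm w₀ w₁ = areaForm v₀ v₁) :
    ∃ g : SpecialLinearGroup (Fin 2) R, g.1 *ᵥ v₀ = w₀ ∧ g.1 *ᵥ v₁ = w₁ := by
  let V : Matrix (Fin 2) (Fin 2) R := (of ![v₀, v₁])ᵀ
  let W : Matrix (Fin 2) (Fin 2) R := (of ![w₀, w₁])ᵀ
  have det_V : V.det = areaForm v₀ v₁ := by simp [V, areaForm, det_fin_two, mul_comm]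
  have det_W : W.det = areaForm w₀ w₁ := by simp [W, areaForm, det_fin_two, mul_comm]
  have isUnit_V : IsUnit V.det := det_V ▸ hv
  have det_eq_one : (W * V⁻¹).det = 1 := by
    rw [det_mul, det_W, hvw, ← det_V, ← det_mul, mul_nonsing_inv V isUnit_V, det_one]
  have mul_V : W * V⁻¹ * V = W := by rw [mul_assoc, nonsing_inv_mul V isUnit_V, mul_one]
  have mulVec_col (j : Fin 2) : (W * V⁻¹) *ᵥ V.col j = W.col j := by
    rw [← mulVec_single_one, mulVec_mulVec, mul_V, mulVec_single_one]
  exact ⟨⟨W * V⁻¹, det_eq_one⟩, mulVec_col 0, mulVec_col 1⟩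

variable [IsDomain R]

lemma mul_sub_cyclic_ne_zero {z : Fin 3 → R} (hz : Function.Injective z) :
    (z 0 - z 1) * ((z 1 - z 2) * (z 2 - z 0)) ≠ 0 := by
  have sub_ne {i j : Fin 3} (hij : i ≠ j) : z i - z j ≠ 0 := sub_ne_zero.2 (hz.ne hij)
  exact mul_ne_zero (sub_ne (by decide)) (mul_ne_zero (sub_ne (by decide)) (sub_ne (by decide)))

lemma mulVec_eq_smul_of_areaForm_mul_eq {A : Matrix (Fin 2) (Fin 2) R}
    {v₀ v₁ v₂ w₀ w₁ w₂ : Fin 2 → R} {c₀ c₁ c₂ t : R} (hv : areaForm v₀ v₁ ≠ 0)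
    (hA₀ : A *ᵥ v₀ = c₀ • w₀) (hA₁ : A *ᵥ v₁ = c₁ • w₁)
    (hc₀ : areaForm v₁ v₂ * c₀ = t * areaForm w₁ w₂)
    (hc₁ : areaForm v₂ v₀ * c₁ = t * areaForm w₂ w₀)
    (hc₂ : areaForm v₀ v₁ * c₂ = t * areaForm w₀ w₁) : A *ᵥ v₂ = c₂ • w₂ := by
  have image_relation : (t * areaForm w₁ w₂) • w₀ + (t * areaForm w₂ w₀) • w₁ +
      areaForm v₀ v₁ • A *ᵥ v₂ = 0 := by
    simpa only [mulVec_add, mulVec_smul, mulVec_zero, hA₀, hA₁, smul_smul, hc₀, hc₁]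
      using congrArg (A *ᵥ ·) (areaForm_smul_add_cyclic v₀ v₁ v₂)
  have relation : t • (areaForm w₁ w₂ • w₀ + areaForm w₂ w₀ • w₁ + areaForm w₀ w₁ • w₂) = 0 := by
    rw [areaForm_smul_add_cyclic, smul_zero]
  have smul_eq : areaForm v₀ v₁ • A *ᵥ v₂ = areaForm v₀ v₁ • c₂ • w₂ := by
    rw [smul_smul, hc₂]
    linear_combination (norm := module) image_relation - relation
  exact smul_right_injective _ hv smul_eq

end AreaForm

-- The relation `[v₁, v₂]v₀ + [v₂, v₀]v₁ + [v₀, v₁]v₂ = 0` must be mapped to a multiple `t` of the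
-- same relation for `w`, which dictates the scalars `c₀`, `c₁`, `c₂`.
lemma exists_mulVec_eq_smul_of_isSquare {K : Type*} [Field K] {v w : Fin 3 → Fin 2 → K}
    (hv : cyclicAreaProduct v ≠ 0) (hw : cyclicAreaProduct w ≠ 0)
    (h : IsSquare (cyclicAreaProduct v * cyclicAreaProduct w)) :
    ∃ g : SpecialLinearGroup (Fin 2) K, ∀ i, ∃ c : K, g.1 *ᵥ v i = c • w i := by
  obtain ⟨t, ht⟩ : ∃ t, t ^ 2 * cyclicAreaProduct w = cyclicAreaProduct v := by
    obtain ⟨s, hs⟩ := h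
    exact ⟨s / cyclicAreaProduct w, by field_simp; linear_combination -hs⟩
  obtain ⟨hv₀₁, hv₁₂, hv₂₀⟩ : areaForm (v 0) (v 1) ≠ 0 ∧ areaForm (v 1) (v 2) ≠ 0 ∧
      areaForm (v 2) (v 0) ≠ 0 := by simpa [cyclicAreaProduct] using hv
  let c₀ := t * areaForm (w 1) (w 2) / areaForm (v 1) (v 2)
  let c₁ := t * areaForm (w 2) (w 0) / areaForm (v 2) (v 0)
  let c₂ := t * areaForm (w 0) (w 1) / areaForm (v 0) (v 1)
  have areaForm_eq : areaForm (c₀ • w 0) (c₁ • w 1) = areaForm (v 0) (v 1) := by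
    simp only [cyclicAreaProduct] at ht
    simp only [areaForm_smul_smul, c₀, c₁]
    field_simp
    linear_combination ht
  obtain ⟨g, hg₀, hg₁⟩ := exists_specialLinearGroup_mulVec_eq hv₀₁.isUnit areaForm_eq
  have hg₂ : g.1 *ᵥ v 2 = c₂ • w 2 := mulVec_eq_smul_of_areaForm_mul_eq hv₀₁ hg₀ hg₁
    (mul_div_cancel₀ _ hv₁₂) (mul_div_cancel₀ _ hv₂₀) (mul_div_cancel₀ _ hv₀₁)
  refine ⟨g, fun i => ?_⟩
  fin_cases i
  exacts [⟨c₀, hg₀⟩, ⟨c₁, hg₁⟩, ⟨c₂, hg₂⟩]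

section ProjectiveOrbits

variable {F : Type} [Field F]

lemma mapSL_mk_eq_mk_iff (g : SpecialLinearGroup (Fin 2) F) {v w : Fin 2 → F} (hv : v ≠ 0)
    (hw : w ≠ 0) :
    mapSL g (Projectivization.mk F v hv) = Projectivization.mk F w hw ↔
      ∃ c : F, g.1 *ᵥ v = c • w := by
  rw [mapSL, Projectivization.map_mk, Projectivization.mk_eq_mk_iff']
  exact exists_congr fun c => eq_comm

section

variable {v w : Fin 3 → Fin 2 → F} (hv₀ : ∀ i, v i ≠ 0) (hw₀ : ∀ i, w i ≠ 0)

lemma exists_mapSL_mk_eq_of_isSquare (hv : cyclicAreaProduct v ≠ 0) (hw : cyclicAreaProduct w ≠ 0)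
    (h : IsSquare (cyclicAreaProduct v * cyclicAreaProduct w)) :
    ∃ g, ∀ i, mapSL g (Projectivization.mk F (v i) (hv₀ i)) =
      Projectivization.mk F (w i) (hw₀ i) := by
  simpa only [mapSL_mk_eq_mk_iff] using exists_mulVec_eq_smul_of_isSquare hv hw h

lemma exists_mapSL_image_range_eq_of_isSquare_comp_perm (hv : cyclicAreaProduct v ≠ 0)
    (σ : Equiv.Perm (Fin 3)) (hw : cyclicAreaProduct (w ∘ σ) ≠ 0)
    (h : IsSquare (cyclicAreaProduct v * cyclicAreaProduct (w ∘ σ))) :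
    ∃ g, mapSL g '' Set.range (fun i => Projectivization.mk F (v i) (hv₀ i)) =
      Set.range fun i => Projectivization.mk F (w i) (hw₀ i) := by
  obtain ⟨g, hg⟩ := exists_mapSL_mk_eq_of_isSquare hv₀ (fun i => hw₀ (σ i)) hv hw h
  refine ⟨g, ?_⟩
  rw [← Set.range_comp', funext hg]
  exact σ.surjective.range_comp fun i => Projectivization.mk F (w i) (hw₀ i)

lemma exists_perm_isSquare_of_mapSL_image_range_eq (hv : cyclicAreaProduct v ≠ 0)
    {g : SpecialLinearGroup (Fin 2) F}
    (hg : mapSL g '' Set.range (fun i => Projectivization.mk F (v i) (hv₀ i)) =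
      Set.range fun i => Projectivization.mk F (w i) (hw₀ i)) :
    ∃ σ : Equiv.Perm (Fin 3), IsSquare (cyclicAreaProduct v * cyclicAreaProduct (w ∘ σ)) := by
  have exists_image (i : Fin 3) : ∃ j, ∃ c : F, g.1 *ᵥ v i = c • w j := by
    obtain ⟨j, hj⟩ := hg ▸ Set.mem_image_of_mem (mapSL g) (Set.mem_range_self i)
    exact ⟨j, (mapSL_mk_eq_mk_iff g (hv₀ i) (hw₀ j)).1 hj.symm⟩
  choose τ c hτ using exists_image
  have product_eq : cyclicAreaProduct v = (c 0 * c 1 * c 2) ^ 2 * cyclicAreaProduct (w ∘ τ) :=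
    cyclicAreaProduct_eq_sq_mul_of_mulVec_eq_smul hτ
  have τ_injective : Function.Injective τ :=
    (injective_of_cyclicAreaProduct_ne_zero (right_ne_zero_of_mul (product_eq ▸ hv))).of_comp
  refine ⟨Equiv.ofBijective τ (Finite.injective_iff_bijective.1 τ_injective),
    c 0 * c 1 * c 2 * cyclicAreaProduct (w ∘ τ), ?_⟩
  rw [Equiv.coe_ofBijective, product_eq]
  ring

theorem exists_mapSL_image_range_eq_iff (hv : cyclicAreaProduct v ≠ 0)
    (hw : cyclicAreaProduct w ≠ 0) :
    (∃ g, mapSL g '' Set.range (fun i => Projectivization.mk F (v i) (hv₀ i)) =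
        Set.range fun i => Projectivization.mk F (w i) (hw₀ i)) ↔
      IsSquare (cyclicAreaProduct v * cyclicAreaProduct w) ∨
        IsSquare (-(cyclicAreaProduct v * cyclicAreaProduct w)) := by
  constructor
  · rintro ⟨g, hg⟩
    obtain ⟨σ, hσ⟩ := exists_perm_isSquare_of_mapSL_image_range_eq hv₀ hw₀ hv hg
    rw [cyclicAreaProduct_comp_perm] at hσ
    rcases Int.units_eq_one_or (Equiv.Perm.sign σ) with hsign | hsign
    · exact .inl (by simpa [hsign] using hσ)
    · exact .inr (by simpa [hsign] using hσ)
  · rintro (hsq | hsq)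
    · exact exists_mapSL_image_range_eq_of_isSquare_comp_perm hv₀ hw₀ hv 1 hw hsq
    · have comp_swap : cyclicAreaProduct (w ∘ Equiv.swap 0 1) = -cyclicAreaProduct w := by
        simp [cyclicAreaProduct_comp_perm]
      refine exists_mapSL_image_range_eq_of_isSquare_comp_perm hv₀ hw₀ hv (Equiv.swap 0 1) ?_ ?_
      · rwa [comp_swap, neg_ne_zero]
      · rwa [comp_swap, mul_neg]

end

lemma vecInftyZero_ne_zero (a : F) (i : Fin 3) :
    (![![1, 0], ![0, 1], ![a, 1]] : Fin 3 → Fin 2 → F) i ≠ 0 := by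
  fin_cases i <;> simp

lemma Tminus_eq_range (a : F) :
    Tminus F a = Set.range fun i => Projectivization.mk F _ (vecInftyZero_ne_zero a i) := by
  ext P
  simp [Tminus, inftyPt, embedPt, Fin.exists_fin_succ, eq_comm]

theorem exists_mapSL_image_Tminus_eq_iff {a : F} (ha : a ≠ 0) {z : Fin 3 → F}
    (hz : Function.Injective z) :
    (∃ g, mapSL g '' Tminus F a = embedPt F '' Set.range z) ↔
      IsSquare (a * ((z 0 - z 1) * ((z 1 - z 2) * (z 2 - z 0)))) ∨
        IsSquare (-(a * ((z 0 - z 1) * ((z 1 - z 2) * (z 2 - z 0))))) := by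
  have hz₀ (i : Fin 3) : ![z i, 1] ≠ 0 := fun h => one_ne_zero (congrFun h 1)
  have orbit_iff := exists_mapSL_image_range_eq_iff (vecInftyZero_ne_zero a) hz₀
    (by rwa [cyclicAreaProduct_infty_zero])
    (by rw [cyclicAreaProduct_affine]; exact mul_sub_cyclic_ne_zero hz)
  rw [cyclicAreaProduct_infty_zero, cyclicAreaProduct_affine] at orbit_iff
  rw [Tminus_eq_range, ← Set.range_comp]
  exact orbit_iff

end ProjectiveOrbits

lemma quadraticChar_eq_neg_one_of_forall_mem_zpowers {F : Type*} [Field F] [Fintype F]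
    [DecidableEq F] (hF : ringChar F ≠ 2) {α : Fˣ} (hα : ∀ x : Fˣ, x ∈ Subgroup.zpowers α) :
    quadraticChar F α = -1 := by
  refine (quadraticChar_dichotomy α.ne_zero).resolve_left fun h => quadraticChar_ne_one hF ?_
  rwa [MulChar.eq_iff hα, MulChar.one_apply_coe]

theorem stmt_3_general {F : Type} [Field F] {R : Type*} [CommRing R] (χ : MulChar F R)
    (hχ : ∀ a : F, a ≠ 0 → (χ a = 1 ↔ IsSquare a)) (hF : IsSquare (-1 : F)) {α : Fˣ}
    (hα : χ α = -1) {z : Fin 3 → F} (hz : Function.Injective z) :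
    (∀ σ : Equiv.Perm (Fin 3),
      χ ((z (σ 0) - z (σ 1)) * ((z (σ 1) - z (σ 2)) * (z (σ 2) - z (σ 0)))) =
        χ ((z 0 - z 1) * ((z 1 - z 2) * (z 2 - z 0))))
    ∧ ((∃ g, mapSL g '' Tplus F = embedPt F '' Set.range z) ↔
        χ ((z 0 - z 1) * ((z 1 - z 2) * (z 2 - z 0))) = 1)
    ∧ ((∃ g, mapSL g '' Tminus F (α : F) = embedPt F '' Set.range z) ↔
        χ ((z 0 - z 1) * ((z 1 - z 2) * (z 2 - z 0))) = -1) := by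
  have orbit_iff {a : F} (ha : a ≠ 0) :
      (∃ g, mapSL g '' Tminus F a = embedPt F '' Set.range z) ↔
        χ a * χ ((z 0 - z 1) * ((z 1 - z 2) * (z 2 - z 0))) = 1 := by
    rw [exists_mapSL_image_Tminus_eq_iff ha hz, ← map_mul,
      hχ _ (mul_ne_zero ha (mul_sub_cyclic_ne_zero hz)), or_iff_left_of_imp]
    exact fun h => by simpa using hF.mul h
  refine ⟨fun σ => ?_, ?_, ?_⟩
  · have χ_neg_one : χ (-1) = 1 := (hχ _ (neg_ne_zero.2 one_ne_zero)).2 hF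
    rw [mul_sub_cyclic_comp_perm, map_mul]
    rcases Int.units_eq_one_or (Equiv.Perm.sign σ) with hσ | hσ <;> simp [hσ, χ_neg_one]
  · have Tplus_eq : Tplus F = Tminus F 1 := rfl
    rw [Tplus_eq, orbit_iff one_ne_zero, map_one, one_mul]
  · rw [orbit_iff α.ne_zero, hα, neg_one_mul, neg_eq_iff_eq_neg]

/-- Lemma 2.3: `Δ({z₁,z₂,z₃}) = χ((z₁-z₂)(z₂-z₃)(z₃-z₁))` is well defined
(invariant under permutations of the zᵢ), and a 3-subset `{z₁,z₂,z₃} ⊆ F` lies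
in the orbit of `{∞,0,1}` iff `Δ = 1`, and in the orbit of `{∞,0,α}` iff `Δ = -1`. -/
theorem stmt_3 (F : Type) [Field F] [Fintype F] [DecidableEq F]
    (q : ℕ) (hq : Fintype.card F = q) (hq4 : q % 4 = 1)
    (α : Fˣ) (hα : ∀ x : Fˣ, x ∈ Subgroup.zpowers α)
    (z : Fin 3 → F) (hz : Function.Injective z) :
    (∀ σ : Equiv.Perm (Fin 3),
      quadraticChar F ((z (σ 0) - z (σ 1)) * ((z (σ 1) - z (σ 2)) * (z (σ 2) - z (σ 0)))) =
        quadraticChar F ((z 0 - z 1) * ((z 1 - z 2) * (z 2 - z 0))))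
    ∧ ((∃ g, mapSL g '' Tplus F = embedPt F '' Set.range z) ↔
        quadraticChar F ((z 0 - z 1) * ((z 1 - z 2) * (z 2 - z 0))) = 1)
    ∧ ((∃ g, mapSL g '' Tminus F (α : F) = embedPt F '' Set.range z) ↔
        quadraticChar F ((z 0 - z 1) * ((z 1 - z 2) * (z 2 - z 0))) = -1) := by
  subst hq
  exact stmt_3_general (quadraticChar F) (fun _ => quadraticChar_one_iff_isSquare)
    (FiniteField.isSquare_neg_one_iff.2 (by lia))
    (quadraticChar_eq_neg_one_of_forall_mem_zpowers
      (mt FiniteField.even_card_iff_char_two.1 (by lia)) hα) hz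
end
end
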